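/- Let ψ and φ be unit vectors in a complex Hilbert space H, and let (P_k)_{k ∈ K} be a finite family of orthogonal projections on H whose ranges are pairwise orthogonal (P_j ∘ P_k = 0 for j ≠ k). Then Σ_{k ∈ K} | ‖P_k ψ‖² − ‖P_k φ‖² | ≤ 4 ‖ψ − φ‖. -/

import Mathlib

/-! The reverse triangle inequality bounds `|‖P k ψ‖ ^ 2 - ‖P k φ‖ ^ 2|` by
`‖P k (ψ - φ)‖ * (‖P k ψ‖ + ‖P k φ‖)`. Since a sum of mutually orthogonal projections is again a
projection, Bessel's inequality `∑ k, ‖P k x‖ ^ 2 ≤ ‖x‖ ^ 2` holds, and Cauchy–Schwarz over the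
outcomes bounds the total by `‖ψ - φ‖ * (‖ψ‖ + ‖φ‖)`. For unit vectors this is `2 * ‖ψ - φ‖`. -/

theorem abs_sq_norm_sub_sq_norm_le {E : Type*} [SeminormedAddCommGroup E] (x y : E) :
    |‖x‖ ^ 2 - ‖y‖ ^ 2| ≤ ‖x - y‖ * (‖x‖ + ‖y‖) :=
  calc |‖x‖ ^ 2 - ‖y‖ ^ 2|
      = |‖x‖ - ‖y‖| * (‖x‖ + ‖y‖) := by
        rw [sq_sub_sq, mul_comm, abs_mul, abs_of_nonneg (by positivity : 0 ≤ ‖x‖ + ‖y‖)]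
    _ ≤ ‖x - y‖ * (‖x‖ + ‖y‖) := by
        gcongr
        exact abs_norm_sub_norm_le x y

section BesselFamily

variable {ι E : Type*} [SeminormedAddCommGroup E] {F : ι → Type*}
  [∀ i, SeminormedAddCommGroup (F i)] {s : Finset ι}

theorem sum_norm_mul_norm_le_of_bessel {A : ∀ i, E → F i}
    (hA : ∀ x, ∑ i ∈ s, ‖A i x‖ ^ 2 ≤ ‖x‖ ^ 2) (x y : E) :
    ∑ i ∈ s, ‖A i x‖ * ‖A i y‖ ≤ ‖x‖ * ‖y‖ :=
  calc ∑ i ∈ s, ‖A i x‖ * ‖A i y‖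
      ≤ √(∑ i ∈ s, ‖A i x‖ ^ 2) * √(∑ i ∈ s, ‖A i y‖ ^ 2) :=
        Real.sum_mul_le_sqrt_mul_sqrt s _ _
    _ ≤ ‖x‖ * ‖y‖ := by
        gcongr
        · exact Real.sqrt_le_left (norm_nonneg x) |>.mpr (hA x)
        · exact Real.sqrt_le_left (norm_nonneg y) |>.mpr (hA y)

theorem sum_abs_sq_norm_sub_sq_norm_le_of_bessel {A : ∀ i, E →+ F i}
    (hA : ∀ x, ∑ i ∈ s, ‖A i x‖ ^ 2 ≤ ‖x‖ ^ 2) (x y : E) :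
    ∑ i ∈ s, |‖A i x‖ ^ 2 - ‖A i y‖ ^ 2| ≤ ‖x - y‖ * (‖x‖ + ‖y‖) :=
  calc ∑ i ∈ s, |‖A i x‖ ^ 2 - ‖A i y‖ ^ 2|
      ≤ ∑ i ∈ s, ‖A i (x - y)‖ * (‖A i x‖ + ‖A i y‖) := by
        gcongr with i
        rw [map_sub]
        exact abs_sq_norm_sub_sq_norm_le (A i x) (A i y)
    _ = ∑ i ∈ s, ‖A i (x - y)‖ * ‖A i x‖ + ∑ i ∈ s, ‖A i (x - y)‖ * ‖A i y‖ := by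
        simp only [mul_add, Finset.sum_add_distrib]
    _ ≤ ‖x - y‖ * ‖x‖ + ‖x - y‖ * ‖y‖ :=
        add_le_add (sum_norm_mul_norm_le_of_bessel hA _ _) (sum_norm_mul_norm_le_of_bessel hA _ _)
    _ = ‖x - y‖ * (‖x‖ + ‖y‖) := (mul_add _ _ _).symm

end BesselFamily

section SymmetricProjection

variable {𝕜 E : Type*} [RCLike 𝕜] [SeminormedAddCommGroup E] [InnerProductSpace 𝕜 E]

theorem re_inner_symmetricProjection_apply_self {T : E →ₗ[𝕜] E} (hT : T.IsSymmetricProjection)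
    (x : E) : RCLike.re (inner 𝕜 (T x) x) = ‖T x‖ ^ 2 := by
  have hTT : T (T x) = T x := LinearMap.congr_fun hT.isIdempotentElem x
  rw [← inner_self_eq_norm_sq (𝕜 := 𝕜) (T x), ← hT.isSymmetric (T x) x, hTT]

theorem norm_symmetricProjection_apply_le {T : E →ₗ[𝕜] E} (hT : T.IsSymmetricProjection) (x : E) :
    ‖T x‖ ≤ ‖x‖ := by
  have hsq : ‖T x‖ ^ 2 ≤ ‖T x‖ * ‖x‖ :=
    re_inner_symmetricProjection_apply_self hT x ▸ re_inner_le_norm (T x) x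
  nlinarith [norm_nonneg x]

variable {ι : Type*} {P : ι → E →ₗ[𝕜] E}

theorem isSymmetricProjection_sum (hP : OrthogonalIdempotents P) (hsymm : ∀ i, (P i).IsSymmetric)
    (s : Finset ι) : (∑ i ∈ s, P i).IsSymmetricProjection where
  isIdempotentElem := hP.isIdempotentElem_sum
  isSymmetric := LinearMap.isSymmetric_sum s fun i _ ↦ hsymm i

theorem sum_sq_norm_symmetricProjection_le (hP : OrthogonalIdempotents P)
    (hsymm : ∀ i, (P i).IsSymmetric) (s : Finset ι) (x : E) :
    ∑ i ∈ s, ‖P i x‖ ^ 2 ≤ ‖x‖ ^ 2 := by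
  have hsum := isSymmetricProjection_sum hP hsymm s
  calc ∑ i ∈ s, ‖P i x‖ ^ 2
      = ∑ i ∈ s, RCLike.re (inner 𝕜 (P i x) x) :=
        Finset.sum_congr rfl fun i _ ↦
          (re_inner_symmetricProjection_apply_self ⟨hP.idem i, hsymm i⟩ x).symm
    _ = RCLike.re (inner 𝕜 ((∑ i ∈ s, P i) x) x) := by
        rw [LinearMap.sum_apply, sum_inner, map_sum]
    _ = ‖(∑ i ∈ s, P i) x‖ ^ 2 := re_inner_symmetricProjection_apply_self hsum x
    _ ≤ ‖x‖ ^ 2 := by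
        gcongr
        exact norm_symmetricProjection_apply_le hsum x

theorem stmt_4_general (hP : OrthogonalIdempotents P) (hsymm : ∀ i, (P i).IsSymmetric) (ψ φ : E) :
    Summable (fun i ↦ |‖P i ψ‖ ^ 2 - ‖P i φ‖ ^ 2|) ∧
      ∑' i, |‖P i ψ‖ ^ 2 - ‖P i φ‖ ^ 2| ≤ ‖ψ - φ‖ * (‖ψ‖ + ‖φ‖) := by
  have hpartial (s : Finset ι) :
      ∑ i ∈ s, |‖P i ψ‖ ^ 2 - ‖P i φ‖ ^ 2| ≤ ‖ψ - φ‖ * (‖ψ‖ + ‖φ‖) :=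
    sum_abs_sq_norm_sub_sq_norm_le_of_bessel (A := fun i ↦ (P i).toAddMonoidHom)
      (sum_sq_norm_symmetricProjection_le hP hsymm s) ψ φ
  exact ⟨summable_of_sum_le (fun _ ↦ abs_nonneg _) hpartial,
    Real.tsum_le_of_sum_le (fun _ ↦ abs_nonneg _) hpartial⟩

end SymmetricProjection

/-- Total-variation bound for projective measurements on pure states: for unit vectors
`ψ`, `φ` and a finite family of orthogonal projections `P k` with pairwise orthogonal
ranges, `Σ_k | ‖P_k ψ‖² − ‖P_k φ‖² | ≤ 4 ‖ψ − φ‖`. -/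
theorem stmt_4 {H : Type*} [NormedAddCommGroup H] [InnerProductSpace ℂ H] [CompleteSpace H]
    {K : Type*} [Fintype K]
    (P : K → (H →L[ℂ] H))
    (hPsa : ∀ k, IsSelfAdjoint (P k)) (hPidem : ∀ k, P k ∘L P k = P k)
    (horth : ∀ j k, j ≠ k → P j ∘L P k = 0)
    (ψ φ : H) (hψ : ‖ψ‖ = 1) (hφ : ‖φ‖ = 1) :
    ∑ k, |‖P k ψ‖ ^ 2 - ‖P k φ‖ ^ 2| ≤ 4 * ‖ψ - φ‖ := by
  have hP : OrthogonalIdempotents P := ⟨hPidem, fun j k ↦ horth j k⟩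
  have hbound := (stmt_4_general (hP.map ContinuousLinearMap.toLinearMapRingHom)
    (fun k ↦ (hPsa k).isSymmetric) ψ φ).2
  calc ∑ k, |‖P k ψ‖ ^ 2 - ‖P k φ‖ ^ 2|
      ≤ ‖ψ - φ‖ * (‖ψ‖ + ‖φ‖) := (tsum_fintype _).symm.trans_le hbound
    _ ≤ 4 * ‖ψ - φ‖ := by rw [hψ, hφ]; linarith [norm_nonneg (ψ - φ)]
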